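/- arXiv:1612.07148 — 2 statements merged into one kernel-verified Lean document; each statement's English description precedes it below -/
import Mathlib

section
/- Let ζ ∈ ℂ with Im(ζ) > 0 and let t ∈ ℝ with t ≠ 0. Then the symmetric improper integral lim_{R → ∞} ∫_{−R}^{R} e^{iEt}/(E − ζ) dE exists; it equals 2πi·e^{itζ} if t > 0, and it equals 0 if t < 0. -/
open Complex Filter Real intervalIntegral

/-!
Write `1 / (E - ζ) = 1 / (E - conj ζ) + 2πi P(E)`, where `P` is the Poisson kernel of the upper half
plane at `ζ`. For `0 < t` the function `exp (i z t)` is bounded on the upper half plane, so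
integrating it against `P` evaluates it at `ζ`, while the pole `conj ζ` lies in the lower half plane
and contributes nothing by Jordan's lemma. For `t < 0` the reflection `E ↦ -E` moves the pole to the
lower half plane, and Jordan's lemma applies directly.
-/

open Asymptotics Bornology MeasureTheory
open scoped ComplexConjugate Topology

section UpperHalfPlaneIntegrals

variable {V : Type*} [NormedAddCommGroup V] [NormedSpace ℂ V] {F : ℂ → V}

/-- The Poisson kernel of the upper half plane at the point `ζ`, as a density on the real line; it
is normalized to have total mass one. -/
noncomputable def halfPlanePoissonKernel (ζ : ℂ) (x : ℝ) : ℝ :=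
  π⁻¹ * ζ.im / ‖(x : ℂ) - ζ‖ ^ 2

lemma halfPlanePoissonKernel_eq_cauchyPDFReal {ζ : ℂ} (hζ : 0 ≤ ζ.im) :
    halfPlanePoissonKernel ζ = ProbabilityTheory.cauchyPDFReal ζ.re ζ.im.toNNReal := by
  ext x
  have hnorm : ‖(x : ℂ) - ζ‖ ^ 2 = (x - ζ.re) ^ 2 + ζ.im ^ 2 := by
    rw [Complex.sq_norm, Complex.normSq_apply]
    simp [sq]
  rw [halfPlanePoissonKernel, ProbabilityTheory.cauchyPDFReal_def, Real.coe_toNNReal _ hζ, hnorm,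
    div_eq_mul_inv]

lemma tendsto_integral_halfPlanePoissonKernel {ζ : ℂ} (hζ : 0 < ζ.im) :
    Tendsto (fun R : ℝ => ∫ x in (-R)..R, halfPlanePoissonKernel ζ x) atTop (𝓝 1) := by
  rw [halfPlanePoissonKernel_eq_cauchyPDFReal hζ.le,
    ← ProbabilityTheory.integral_cauchyPDFReal_eq_one ζ.re (Real.toNNReal_pos.2 hζ).ne']
  exact intervalIntegral_tendsto_integral (ProbabilityTheory.integrable_cauchyPDFReal _)
    tendsto_neg_atTop_atBot tendsto_id

lemma ofReal_sub_ne_zero_of_im_ne_zero {w : ℂ} (hw : w.im ≠ 0) (x : ℝ) : (x : ℂ) - w ≠ 0 :=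
  fun h => hw (by simpa using congrArg Complex.im h)

lemma continuous_halfPlanePoissonKernel {ζ : ℂ} (hζ : ζ.im ≠ 0) :
    Continuous (halfPlanePoissonKernel ζ) :=
  continuous_const.div (by fun_prop) fun x =>
    pow_ne_zero 2 (norm_ne_zero_iff.2 (ofReal_sub_ne_zero_of_im_ne_zero hζ x))

lemma ofReal_halfPlanePoissonKernel (ζ : ℂ) (x : ℝ) :
    (halfPlanePoissonKernel ζ x : ℂ) =
      (π⁻¹ * ζ.im : ℝ) * (((x : ℂ) - conj ζ)⁻¹ * ((x : ℂ) - ζ)⁻¹) := by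
  have hnorm : ((x : ℂ) - conj ζ) * ((x : ℂ) - ζ) = (‖(x : ℂ) - ζ‖ ^ 2 : ℝ) := by
    simpa using Complex.conj_mul' ((x : ℂ) - ζ)
  rw [← mul_inv, hnorm, ← ofReal_inv, ← ofReal_mul, halfPlanePoissonKernel, div_eq_mul_inv]

lemma inv_ofReal_sub_eq_inv_ofReal_sub_conj_add {ζ : ℂ} (hζ : ζ.im ≠ 0) (x : ℝ) :
    ((x : ℂ) - ζ)⁻¹ = ((x : ℂ) - conj ζ)⁻¹ + 2 * π * I * halfPlanePoissonKernel ζ x := by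
  have hne := ofReal_sub_ne_zero_of_im_ne_zero hζ x
  have hne_conj := ofReal_sub_ne_zero_of_im_ne_zero (w := conj ζ) (by simpa using hζ) x
  have hsub : ζ - conj ζ = 2 * ζ.im * I := by simpa using Complex.sub_conj ζ
  have hπ : (π : ℂ) ≠ 0 := ofReal_ne_zero.2 Real.pi_ne_zero
  rw [ofReal_halfPlanePoissonKernel]
  push_cast
  field_simp
  linear_combination hsub

lemma integral_eq_of_diffContOnCl_im_pos (hF : DiffContOnCl ℂ F {z | 0 < z.im}) (a b : ℝ) {h : ℝ}
    (hh : 0 ≤ h) :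
    ∫ x in a..b, F x = (∫ x in a..b, F (x + h * I)) - I • (∫ y in (0 : ℝ)..h, F (b + y * I))
      + I • ∫ y in (0 : ℝ)..h, F (a + y * I) := by
  have hcont : ContinuousOn F {z | 0 ≤ z.im} := by simpa using hF.continuousOn
  have hrect := Complex.integral_boundary_rect_eq_zero_of_continuousOn_of_differentiableOn F
    a (b + h * I)
    (hcont.mono fun z hz => by
      have him : z.im ∈ Set.uIcc 0 h := by simpa using hz.2
      exact (Set.uIcc_of_le hh ▸ him).1)
    (hF.differentiableOn.mono fun z hz => by simpa [hh] using hz.2.1)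
  simp only [ofReal_re, ofReal_im, add_re, add_im, re_ofReal_mul, im_ofReal_mul, I_re, I_im,
    mul_zero, mul_one, add_zero, zero_add, ofReal_zero, zero_mul] at hrect
  rw [← sub_eq_zero, ← hrect]
  abel

lemma norm_integral_le_of_norm_le_im {g : ℝ → ℝ} {R : ℝ} (hR : 0 ≤ R)
    (hF : DiffContOnCl ℂ F {z | 0 < z.im}) (hg : IntervalIntegrable g volume 0 R)
    (hFg : ∀ z : ℂ, 0 ≤ z.im → R ≤ ‖z‖ → ‖F z‖ ≤ g z.im) :
    ‖∫ x in (-R)..R, F x‖ ≤ 2 * R * g R + 2 * ∫ y in (0 : ℝ)..R, g y := by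
  have htop : ‖∫ x in (-R)..R, F (x + R * I)‖ ≤ 2 * R * g R := by
    have hbound (x : ℝ) : ‖F (x + R * I)‖ ≤ g R := by
      simpa using hFg (x + R * I) (by simpa using hR)
        (by simpa [abs_of_nonneg hR] using Complex.abs_im_le_norm ((x : ℂ) + R * I))
    refine (intervalIntegral.norm_integral_le_of_norm_le_const fun x _ => hbound x).trans_eq ?_
    rw [abs_of_nonneg (by linarith)]
    ring
  have hside (a : ℝ) (ha : |a| = R) :
      ‖∫ y in (0 : ℝ)..R, F (a + y * I)‖ ≤ ∫ y in (0 : ℝ)..R, g y := by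
    refine intervalIntegral.norm_integral_le_of_norm_le hR (.of_forall fun y hy => ?_) hg
    simpa using hFg (a + y * I) (by simpa using hy.1.le)
      (by simpa [ha] using Complex.abs_re_le_norm ((a : ℂ) + y * I))
  calc ‖∫ x in (-R)..R, F x‖
      ≤ ‖∫ x in (-R)..R, F (x + R * I)‖ + ‖I • ∫ y in (0 : ℝ)..R, F (R + y * I)‖
        + ‖I • ∫ y in (0 : ℝ)..R, F ((-R : ℝ) + y * I)‖ := by
        rw [integral_eq_of_diffContOnCl_im_pos hF (-R) R hR]
        refine (norm_add_le _ _).trans ?_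
        gcongr
        exact norm_sub_le _ _
    _ ≤ 2 * R * g R + (∫ y in (0 : ℝ)..R, g y) + ∫ y in (0 : ℝ)..R, g y := by
        simp only [norm_smul, norm_I, one_mul]
        gcongr
        exacts [hside R (abs_of_nonneg hR), hside (-R) (by simp [abs_of_nonneg hR])]
    _ = 2 * R * g R + 2 * ∫ y in (0 : ℝ)..R, g y := by ring

lemma eventually_forall_le_norm_of_eventually_cobounded {W : Type*} [SeminormedAddGroup W]
    {s : Set W} {p : W → Prop} (h : ∀ᶠ z in cobounded W ⊓ 𝓟 s, p z) :
    ∀ᶠ R : ℝ in atTop, ∀ z ∈ s, R ≤ ‖z‖ → p z := by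
  obtain ⟨R₀, -, hR₀⟩ := (hasBasis_cobounded_norm.inf_principal s).eventually_iff.1 h
  filter_upwards [eventually_ge_atTop R₀] with R hR z hz hRz
  exact hR₀ ⟨hR.trans hRz, hz⟩

lemma tendsto_integral_zero_of_isLittleO_inv (hF : DiffContOnCl ℂ F {z | 0 < z.im})
    (hF₀ : F =o[cobounded ℂ ⊓ 𝓟 {z | 0 ≤ z.im}] (fun z => z⁻¹)) :
    Tendsto (fun R : ℝ => ∫ x in (-R)..R, F x) atTop (𝓝 0) := by
  rw [← isLittleO_const_iff (four_ne_zero (α := ℝ))]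
  refine .of_bound fun c hc => ?_
  filter_upwards [eventually_forall_le_norm_of_eventually_cobounded (hF₀.bound hc),
    eventually_gt_atTop 0] with R hbound hR
  have hle := norm_integral_le_of_norm_le_im (g := fun _ => c * R⁻¹) hR.le hF
    intervalIntegrable_const fun z hz hRz => (hbound z hz hRz).trans (by rw [norm_inv]; gcongr)
  refine hle.trans_eq ?_
  rw [intervalIntegral.integral_const, Real.norm_ofNat, smul_eq_mul]
  field_simp
  ring

lemma integral_exp_neg_mul_le_inv {t : ℝ} (ht : 0 < t) (R : ℝ) :
    ∫ y in (0 : ℝ)..R, Real.exp (-(t * y)) ≤ t⁻¹ := by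
  simp only [← neg_mul]
  rw [intervalIntegral.integral_comp_mul_left Real.exp (neg_ne_zero.2 ht.ne'), integral_exp,
    mul_zero, Real.exp_zero, smul_eq_mul, inv_neg, neg_mul, ← mul_neg, neg_sub]
  exact mul_le_of_le_one_right (inv_nonneg.2 ht.le) (sub_le_self _ (Real.exp_nonneg _))

lemma mul_exp_neg_mul_le_inv {t : ℝ} (ht : 0 < t) (R : ℝ) : R * Real.exp (-(t * R)) ≤ t⁻¹ := by
  rw [← mul_le_mul_iff_right₀ ht, mul_inv_cancel₀ ht.ne', ← mul_assoc]
  exact (Real.mul_exp_neg_le_exp_neg_one _).trans (Real.exp_le_one_iff.2 (by norm_num))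

lemma norm_exp_I_mul_mul_ofReal (z : ℂ) (t : ℝ) :
    ‖Complex.exp (I * z * t)‖ = Real.exp (-(t * z.im)) := by
  simp [Complex.norm_exp, mul_comm]

lemma differentiable_exp_I_mul_mul_const (w : ℂ) :
    Differentiable ℂ fun z : ℂ => Complex.exp (I * z * w) := by
  fun_prop

lemma tendsto_integral_exp_smul_zero {t : ℝ} (ht : 0 < t) (hF : DiffContOnCl ℂ F {z | 0 < z.im})
    (hF₀ : Tendsto F (cobounded ℂ ⊓ 𝓟 {z | 0 ≤ z.im}) (𝓝 0)) :
    Tendsto (fun R : ℝ => ∫ x in (-R)..R, Complex.exp (I * x * t) • F x) atTop (𝓝 0) := by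
  have hexpF : DiffContOnCl ℂ (fun z => Complex.exp (I * z * t) • F z) {z | 0 < z.im} :=
    (differentiable_exp_I_mul_mul_const t).diffContOnCl.smul hF
  rw [← isLittleO_const_iff (c := 4 * t⁻¹) (by positivity)]
  refine .of_bound fun c hc => ?_
  filter_upwards [eventually_forall_le_norm_of_eventually_cobounded
    (((isLittleO_one_iff ℝ).2 hF₀).bound hc), eventually_ge_atTop 0] with R hbound hR
  have hle := norm_integral_le_of_norm_le_im (g := fun y => c * Real.exp (-(t * y))) hR hexpF
    (Continuous.intervalIntegrable (by fun_prop) _ _) fun z hz hRz => by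
      rw [norm_smul, norm_exp_I_mul_mul_ofReal, mul_comm]
      gcongr
      simpa using hbound z hz hRz
  calc ‖∫ x in (-R)..R, Complex.exp (I * x * t) • F x‖
      ≤ 2 * c * (R * Real.exp (-(t * R))) + 2 * c * ∫ y in (0 : ℝ)..R, Real.exp (-(t * y)) := by
        rw [intervalIntegral.integral_const_mul] at hle
        linarith
    _ ≤ 2 * c * t⁻¹ + 2 * c * t⁻¹ := by
        gcongr
        exacts [mul_exp_neg_mul_le_inv ht R, integral_exp_neg_mul_le_inv ht R]
    _ = c * ‖4 * t⁻¹‖ := by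
        rw [Real.norm_of_nonneg (by positivity)]
        ring

lemma isBigO_inv_sub_cobounded {𝕜 : Type*} [NormedField 𝕜] (w : 𝕜) :
    (fun z => (z - w)⁻¹) =O[cobounded 𝕜] (fun z => z⁻¹) := by
  have hid : (fun z => z) =O[cobounded 𝕜] (fun z => z - w) :=
    (isLittleO_const_id_cobounded w).right_isBigO_sub
  refine hid.inv_rev ?_
  filter_upwards [eventually_ne_cobounded 0] with z hz hz'
  exact absurd hz' hz

lemma diffContOnCl_inv_sub_of_im_neg {w : ℂ} (hw : w.im < 0) :
    DiffContOnCl ℂ (fun z => (z - w)⁻¹) {z | 0 < z.im} := by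
  refine DiffContOnCl.inv (f := fun z => z - w) (by fun_prop : Differentiable ℂ _).diffContOnCl ?_
  intro z hz
  rw [closure_setOfPred_lt_im, Set.mem_ofPred_eq] at hz
  exact sub_ne_zero.2 fun h => (hw.trans_le hz).ne (congrArg Complex.im h.symm)

lemma tendsto_integral_exp_div_sub_of_im_neg {t : ℝ} (ht : 0 < t) {w : ℂ} (hw : w.im < 0) :
    Tendsto (fun R : ℝ => ∫ x in (-R)..R, Complex.exp (I * x * t) / ((x : ℂ) - w))
      atTop (𝓝 0) := by
  have hdecay : Tendsto (fun z : ℂ => (z - w)⁻¹) (cobounded ℂ) (𝓝 0) :=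
    (isBigO_inv_sub_cobounded w).trans_tendsto tendsto_inv₀_cobounded
  simpa only [smul_eq_mul, ← div_eq_mul_inv] using
    tendsto_integral_exp_smul_zero ht (diffContOnCl_inv_sub_of_im_neg hw)
      (hdecay.mono_left inf_le_left)

lemma diffContOnCl_dslope [CompleteSpace V] {s : Set ℂ} {ζ : ℂ} (hF : DiffContOnCl ℂ F s)
    (hs : s ∈ 𝓝 ζ) :
    DiffContOnCl ℂ (dslope F ζ) s :=
  ⟨(Complex.differentiableOn_dslope hs).2 hF.differentiableOn,
    (continuousOn_dslope (mem_of_superset hs subset_closure)).2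
      ⟨hF.continuousOn, hF.differentiableAt' hs⟩⟩

lemma dslope_isLittleO_one {l : Filter ℂ} (hl : l ≤ cobounded ℂ) (hF : F =o[l] (id : ℂ → ℂ))
    (ζ : ℂ) : dslope F ζ =o[l] (fun _ => (1 : ℂ)) := by
  have hsub : (fun z => F z - F ζ) =o[l] (id : ℂ → ℂ) :=
    hF.sub ((isLittleO_const_id_cobounded (F ζ)).mono hl)
  refine (((isBigO_inv_sub_cobounded ζ).mono hl).smul_isLittleO hsub).congr' ?_ ?_
  · filter_upwards [hl (eventually_ne_cobounded ζ)] with z hz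
    rw [dslope_of_ne _ hz, slope_def_module]
  · filter_upwards [hl (eventually_ne_cobounded 0)] with z hz
    exact inv_mul_cancel₀ hz

lemma tendsto_integral_halfPlanePoissonKernel_smul [CompleteSpace V] {ζ : ℂ}
    (hζ : 0 < ζ.im) (hF : DiffContOnCl ℂ F {z | 0 < z.im})
    (hF₀ : F =o[cobounded ℂ ⊓ 𝓟 {z | 0 ≤ z.im}] (id : ℂ → ℂ)) :
    Tendsto (fun R : ℝ => ∫ x in (-R)..R, halfPlanePoissonKernel ζ x • F x) atTop (𝓝 (F ζ)) := by
  -- On the real line `G` is the Poisson kernel times `F - F ζ`, up to a constant; the zero of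
  -- `F - F ζ` cancels the pole at `ζ`, so `G` extends holomorphically and integrates to zero.
  set G : ℂ → V := fun z => (z - conj ζ)⁻¹ • dslope F ζ z with hG_def
  have hG : DiffContOnCl ℂ G {z | 0 < z.im} :=
    (diffContOnCl_inv_sub_of_im_neg (by simpa using hζ)).smul
      (diffContOnCl_dslope hF ((isOpen_lt continuous_const continuous_im).mem_nhds hζ))
  have hG₀ : G =o[cobounded ℂ ⊓ 𝓟 {z | 0 ≤ z.im}] (fun z => z⁻¹) := by
    simpa using ((isBigO_inv_sub_cobounded (conj ζ)).mono inf_le_left).smul_isLittleO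
      (dslope_isLittleO_one inf_le_left hF₀ ζ)
  have hG_cont : Continuous fun x : ℝ => G x :=
    hG.continuousOn.comp_continuous continuous_ofReal fun x => by simp
  have hsplit (x : ℝ) : halfPlanePoissonKernel ζ x • F x
      = (π⁻¹ * ζ.im) • G x + halfPlanePoissonKernel ζ x • F ζ := by
    have hx : (x : ℂ) ≠ ζ := sub_ne_zero.1 (ofReal_sub_ne_zero_of_im_ne_zero hζ.ne' x)
    rw [← sub_eq_iff_eq_add, ← smul_sub, ← Complex.coe_smul, ofReal_halfPlanePoissonKernel, hG_def]
    simp only [dslope_of_ne F hx, slope_def_module, smul_smul, ← Complex.coe_smul]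
  have hlim := ((tendsto_integral_zero_of_isLittleO_inv hG hG₀).const_smul (π⁻¹ * ζ.im)).add
    ((tendsto_integral_halfPlanePoissonKernel hζ).smul_const (F ζ))
  rw [smul_zero, zero_add, one_smul] at hlim
  refine hlim.congr fun R => ?_
  simp only [hsplit]
  rw [intervalIntegral.integral_add, intervalIntegral.integral_smul,
    intervalIntegral.integral_smul_const]
  · exact (hG_cont.const_smul _).intervalIntegrable _ _
  · exact ((continuous_halfPlanePoissonKernel hζ.ne').smul continuous_const).intervalIntegrable _ _

end UpperHalfPlaneIntegrals

lemma isLittleO_exp_I_mul_mul_id {t : ℝ} (ht : 0 ≤ t) :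
    (fun z => Complex.exp (I * z * t)) =o[cobounded ℂ ⊓ 𝓟 {z | 0 ≤ z.im}] (id : ℂ → ℂ) := by
  have hbounded : (fun z => Complex.exp (I * z * t)) =O[cobounded ℂ ⊓ 𝓟 {z | 0 ≤ z.im}]
      (fun _ => (1 : ℂ)) := by
    refine .of_bound 1 (eventually_inf_principal.2 (.of_forall fun z (hz : 0 ≤ z.im) => ?_))
    rw [norm_exp_I_mul_mul_ofReal, norm_one, mul_one, Real.exp_le_one_iff]
    exact neg_nonpos.2 (mul_nonneg ht hz)
  exact hbounded.trans_isLittleO ((isLittleO_const_id_cobounded 1).mono inf_le_left)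

lemma tendsto_integral_exp_div_sub_of_pos {ζ : ℂ} (hζ : 0 < ζ.im) {t : ℝ} (ht : 0 < t) :
    Tendsto (fun R : ℝ => ∫ x in (-R)..R, Complex.exp (I * x * t) / ((x : ℂ) - ζ)) atTop
      (𝓝 (2 * π * I * Complex.exp (I * t * ζ))) := by
  have hconj : (conj ζ).im < 0 := by simpa using hζ
  have hlim := (tendsto_integral_exp_div_sub_of_im_neg ht hconj).add
    ((tendsto_integral_halfPlanePoissonKernel_smul hζ
      (differentiable_exp_I_mul_mul_const t).diffContOnCl
      (isLittleO_exp_I_mul_mul_id ht.le)).const_mul (2 * π * I))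
  rw [zero_add, mul_right_comm I ζ] at hlim
  refine hlim.congr fun R => ?_
  rw [← intervalIntegral.integral_const_mul, ← intervalIntegral.integral_add]
  · refine intervalIntegral.integral_congr fun x _ => ?_
    simp only [div_eq_mul_inv, inv_ofReal_sub_eq_inv_ofReal_sub_conj_add hζ.ne', real_smul]
    ring
  · exact ((by fun_prop : Continuous _).div (by fun_prop)
      (ofReal_sub_ne_zero_of_im_ne_zero hconj.ne)).intervalIntegrable _ _
  · exact (((continuous_halfPlanePoissonKernel hζ.ne').smul (by fun_prop)).const_mul
      _).intervalIntegrable _ _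

lemma tendsto_integral_exp_div_sub_of_neg {ζ : ℂ} (hζ : 0 < ζ.im) {t : ℝ} (ht : t < 0) :
    Tendsto (fun R : ℝ => ∫ x in (-R)..R, Complex.exp (I * x * t) / ((x : ℂ) - ζ)) atTop
      (𝓝 0) := by
  have hlim := (tendsto_integral_exp_div_sub_of_im_neg (neg_pos.2 ht) (w := -ζ)
    (by simpa using hζ)).neg
  rw [neg_zero] at hlim
  refine hlim.congr fun R => ?_
  have hreflect := intervalIntegral.integral_comp_neg (a := -R) (b := R)
    fun x : ℝ => Complex.exp (I * x * t) / ((x : ℂ) - ζ)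
  rw [neg_neg] at hreflect
  rw [← hreflect, ← intervalIntegral.integral_neg]
  refine intervalIntegral.integral_congr fun x _ => ?_
  simp only [ofReal_neg, mul_neg, neg_mul, sub_neg_eq_add, ← neg_add', div_neg]

theorem fourierTransform_polarNumber (ζ : ℂ) (hζ : 0 < ζ.im) (t : ℝ) (ht : t ≠ 0) :
    (0 < t → Tendsto (fun R : ℝ => ∫ E in (-R)..R,
        Complex.exp (Complex.I * (E : ℂ) * (t : ℂ)) / ((E : ℂ) - ζ)) atTop
      (nhds (2 * (π : ℂ) * Complex.I * Complex.exp (Complex.I * (t : ℂ) * ζ)))) ∧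
    (t < 0 → Tendsto (fun R : ℝ => ∫ E in (-R)..R,
        Complex.exp (Complex.I * (E : ℂ) * (t : ℂ)) / ((E : ℂ) - ζ)) atTop
      (nhds 0)) :=
  ⟨tendsto_integral_exp_div_sub_of_pos hζ, tendsto_integral_exp_div_sub_of_neg hζ⟩
end

section
/- Let ω₁, ω₂ ∈ ℂ with Im(ω₁) < 0 and Im(ω₂) < 0, and let p ∈ ℝ. For k ∈ ℝ define σ₁⁺(k) = (1/(2ω₁))·1/(k − ω₁), σ₁⁻(k) = −(1/(2ω₁))·1/(k + ω₁), σ₂⁺(k) = (1/(2ω₂))·1/(k − p − ω₂), σ₂⁻(k) = −(1/(2ω₂))·1/(k − p + ω₂), and τᵢ^±(k) = −conj(σᵢ^∓(k)) for i = 1, 2 (complex conjugation of the value). Set zᵢ = σᵢ⁺ + σᵢ⁻, wᵢ = τᵢ⁺ + τᵢ⁻, uᵢ = σᵢ⁺ + τᵢ⁻, vᵢ = σᵢ⁻ + τᵢ⁺ (pointwise in k). Then each of the four functions z₁z₂, w₁w₂, u₁v₂, v₁u₂ is (Bochner) integrable on ℝ and ∫_{ℝ} z₁(k)z₂(k) dk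 + ∫_{ℝ} w₁(k)w₂(k) dk = ∫_{ℝ} u₁(k)v₂(k) dk + ∫_{ℝ} v₁(k)u₂(k) dk. -/
/-!
A function holomorphic on the upper half-plane and decaying faster than `1 / |z|` there has zero
integral along the real axis, by Cauchy's theorem on large rectangles. Hence the product of two
functions of size `O(1 / |z|)` whose poles all lie on the same side of the axis integrates to zero.
The bubble polynomial identity writes the difference between the two sides of the cutting equation
as a sum of such products.
-/

open MeasureTheory Complex

section CauchyHalfPlane

open Filter Asymptotics Bornology Topology Set Interval

variable {E : Type*} [NormedAddCommGroup E] [NormedSpace ℂ E]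

theorem norm_intervalIntegral_le_of_diffContOnCl_upperHalfPlane {f : ℂ → E}
    (hf : DiffContOnCl ℂ f {z | 0 < z.im}) {R C : ℝ} (hR : 0 ≤ R)
    (hC : ∀ z : ℂ, 0 ≤ z.im → R ≤ ‖z‖ → ‖f z‖ ≤ C) :
    ‖∫ x : ℝ in -R..R, f x‖ ≤ 4 * C * R := by
  have hcont : ContinuousOn f {z | 0 ≤ z.im} := by
    simpa only [closure_setOfPred_lt_im] using hf.continuousOn
  have hclosed : [[-R, R]] ×ℂ [[0, R]] ⊆ {z | 0 ≤ z.im} := fun z hz => by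
    rw [uIcc_of_le hR] at hz
    exact hz.2.1
  have hopen : Ioo (min (-R) R) (max (-R) R) ×ℂ Ioo (min 0 R) (max 0 R) ⊆ {z | 0 < z.im} :=
    fun z hz => by
      rw [min_eq_left hR] at hz
      exact hz.2.1
  have hcauchy := integral_boundary_rect_eq_zero_of_continuousOn_of_differentiableOn f
    (-R : ℂ) (R + R * I)
    (hcont.mono (by simpa using hclosed)) (hf.differentiableOn.mono (by simpa using hopen))
  simp only [neg_re, ofReal_re, add_re, mul_re, I_re, mul_zero, ofReal_im, I_im, mul_one, sub_zero,
    add_zero, neg_im, neg_zero, ofReal_zero, zero_mul, add_im, mul_im, zero_add,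
    ofReal_neg] at hcauchy
  have htop : ‖∫ x : ℝ in -R..R, f (x + R * I)‖ ≤ C * |R - -R| :=
    intervalIntegral.norm_integral_le_of_norm_le_const fun x _ =>
      hC _ (by simpa using hR) (by simpa [abs_of_nonneg hR] using abs_im_le_norm (x + R * I))
  have hside (c : ℝ) (hc : |c| = R) : ‖∫ y : ℝ in (0 : ℝ)..R, f (c + y * I)‖ ≤ C * |R - 0| :=
    intervalIntegral.norm_integral_le_of_norm_le_const fun y hy => by
      rw [uIoc_of_le hR] at hy
      exact hC _ (by simpa using hy.1.le) (by simpa [hc] using abs_re_le_norm (c + y * I))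
  have hright := hside R (abs_of_nonneg hR)
  have hleft := hside (-R) (by rw [abs_neg, abs_of_nonneg hR])
  rw [ofReal_neg] at hleft
  rw [sub_neg_eq_add, abs_of_nonneg (by positivity)] at htop
  rw [sub_zero, abs_of_nonneg hR] at hright hleft
  calc ‖∫ x : ℝ in -R..R, f x‖
      = ‖(∫ x : ℝ in -R..R, f (x + R * I)) - I • (∫ y : ℝ in (0 : ℝ)..R, f (R + y * I))
          + I • ∫ y : ℝ in (0 : ℝ)..R, f (-R + y * I)‖ := by
        congr 1
        rw [← sub_eq_zero, ← hcauchy]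
        abel
    _ ≤ C * (R + R) + C * R + C * R := by
        refine norm_add_le_of_le (norm_sub_le_of_le htop ?_) ?_ <;>
          simpa only [norm_smul, norm_I, one_mul]
    _ = 4 * C * R := by ring

theorem integral_eq_zero_of_diffContOnCl_upperHalfPlane {f : ℂ → E}
    (hf : DiffContOnCl ℂ f {z | 0 < z.im})
    (hdecay : f =o[cobounded ℂ ⊓ 𝓟 {z | 0 ≤ z.im}] fun z => z⁻¹)
    (hint : Integrable fun x : ℝ => f x) :
    ∫ x : ℝ, f x = 0 := by
  have hlim : Tendsto (fun R : ℝ => ∫ x : ℝ in -R..R, f x) atTop (𝓝 (∫ x : ℝ, f x)) :=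
    intervalIntegral_tendsto_integral hint tendsto_neg_atTop_atBot tendsto_id
  refine tendsto_nhds_unique hlim (NormedAddGroup.tendsto_nhds_zero.2 fun ε hε => ?_)
  have hbound := hdecay.def (show 0 < ε / 8 by positivity)
  rw [eventually_inf_principal, ← comap_norm_atTop, eventually_comap] at hbound
  obtain ⟨R₀, hR₀⟩ := eventually_atTop.1 hbound
  filter_upwards [eventually_ge_atTop R₀, eventually_gt_atTop 0] with R hRR₀ hR
  have hC (z : ℂ) (hz : 0 ≤ z.im) (hRz : R ≤ ‖z‖) : ‖f z‖ ≤ ε / 8 * R⁻¹ := by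
    refine (hR₀ ‖z‖ (hRR₀.trans hRz) z rfl hz).trans ?_
    rw [norm_inv]
    gcongr
  calc ‖∫ x : ℝ in -R..R, f x‖
      ≤ 4 * (ε / 8 * R⁻¹) * R :=
        norm_intervalIntegral_le_of_diffContOnCl_upperHalfPlane hf hR.le hC
    _ = ε / 2 := by field_simp; norm_num
    _ < ε := half_lt_self hε

end CauchyHalfPlane

section Polarized

open Filter Asymptotics Bornology Set

theorem memLp_two_of_continuous_of_isBigO_inv {E : Type*} [NormedAddCommGroup E] {f : ℝ → E}
    (hf : Continuous f) (hdecay : f =O[cobounded ℝ] fun x => x⁻¹) : MemLp f 2 := by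
  rw [memLp_two_iff_integrable_sq_norm hf.aestronglyMeasurable]
  have hinv : (fun x : ℝ => x⁻¹ ^ 2) =O[cobounded ℝ] fun x => (1 + x ^ 2)⁻¹ := by
    refine IsBigO.of_bound 2 ?_
    filter_upwards [(tendsto_norm_cobounded_atTop (E := ℝ)).eventually_ge_atTop 1] with x hx
    have hx2 : 1 ≤ x ^ 2 := by simpa using one_le_pow₀ hx (n := 2)
    rw [Real.norm_of_nonneg (by positivity), Real.norm_of_nonneg (by positivity), inv_pow,
      ← div_eq_mul_inv, inv_le_comm₀ (by positivity) (by positivity), inv_div]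
    linarith
  rw [Metric.cobounded_eq_cocompact] at hdecay hinv
  have hsq : Continuous fun x => ‖f x‖ ^ 2 := by fun_prop
  exact hsq.locallyIntegrable.integrable_of_isBigO_cocompact
    ((hdecay.norm_left.pow 2).trans hinv) (integrable_inv_one_add_sq.integrableAtFilter _)

/-- The polarized functions with poles below the real axis: boundary values on `ℝ` of functions
holomorphic on the open upper half-plane, continuous up to the axis, and `O(1 / |z|)` at infinity.
By Schwarz reflection, `f` is polarized with poles above the axis when `star f ∈ upperPolarized`. -/
def upperPolarized : Submodule ℂ (ℝ → ℂ) where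
  carrier := {f | ∃ F : ℂ → ℂ, DiffContOnCl ℂ F {z | 0 < z.im} ∧
    F =O[cobounded ℂ ⊓ 𝓟 {z | 0 ≤ z.im}] (fun z => z⁻¹) ∧ ∀ x : ℝ, F x = f x}
  zero_mem' := ⟨0, diffContOnCl_const, isBigO_zero _ _, fun _ => rfl⟩
  add_mem' := by
    rintro f g ⟨F, hF, hFO, hFf⟩ ⟨G, hG, hGO, hGg⟩
    exact ⟨F + G, hF.add hG, hFO.add hGO, fun x => congrArg₂ (· + ·) (hFf x) (hGg x)⟩
  smul_mem' := by
    rintro c f ⟨F, hF, hFO, hFf⟩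
    exact ⟨c • F, hF.const_smul c, hFO.const_smul_left c, fun x => congrArg (c • ·) (hFf x)⟩

variable {f g : ℝ → ℂ}

theorem mul_inv_sub_mem_upperPolarized (c : ℂ) {a : ℂ} (ha : a.im < 0) :
    (fun x : ℝ => c * ((x : ℂ) - a)⁻¹) ∈ upperPolarized := by
  refine upperPolarized.smul_mem c ⟨fun z => (z - a)⁻¹, ?_, ?_, fun _ => rfl⟩
  · refine (Differentiable.diffContOnCl (by fun_prop)).inv fun z hz hza => ?_
    rw [closure_setOfPred_lt_im, mem_ofPred_eq, sub_eq_zero.1 hza] at hz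
    exact ha.not_ge hz
  · have hresolvent : resolvent a = fun z : ℂ => (z - a)⁻¹ :=
      funext fun z => Ring.inverse_eq_inv (z - a)
    rw [← hresolvent]
    exact (spectrum.resolvent_isBigO_inv a).mono inf_le_left

theorem star_mul_inv_sub_mem_upperPolarized (c : ℂ) {a : ℂ} (ha : 0 < a.im) :
    star (fun x : ℝ => c * ((x : ℂ) - a)⁻¹) ∈ upperPolarized := by
  have hconj : (starRingEnd ℂ a).im < 0 := by simpa using ha
  convert mul_inv_sub_mem_upperPolarized (starRingEnd ℂ c) hconj using 1
  ext x
  simp [Pi.star_apply]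

theorem memLp_two_of_mem_upperPolarized (hf : f ∈ upperPolarized) : MemLp f 2 := by
  obtain ⟨F, hF, hFO, hFf⟩ := hf
  obtain rfl : (fun x : ℝ => F x) = f := funext hFf
  have hcont : ContinuousOn F {z | 0 ≤ z.im} := by
    simpa only [closure_setOfPred_lt_im] using hF.continuousOn
  have hreal : Tendsto ((↑) : ℝ → ℂ) (cobounded ℝ) (cobounded ℂ ⊓ 𝓟 {z | 0 ≤ z.im}) :=
    tendsto_inf.2 ⟨RCLike.tendsto_ofReal_cobounded_cobounded ℂ, by simp⟩
  refine memLp_two_of_continuous_of_isBigO_inv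
    (hcont.comp_continuous continuous_ofReal fun _ => by simp) ?_
  refine (hFO.comp_tendsto hreal).trans (IsBigO.of_bound 1 (Eventually.of_forall fun x => ?_))
  simp

theorem memLp_two_of_star_mem_upperPolarized (hf : star f ∈ upperPolarized) : MemLp f 2 := by
  simpa only [star_star] using (memLp_two_of_mem_upperPolarized hf).star

theorem integral_mul_eq_zero_of_mem_upperPolarized (hf : f ∈ upperPolarized)
    (hg : g ∈ upperPolarized) : ∫ x, (f * g) x = 0 := by
  have hint : Integrable (f * g) :=
    (memLp_two_of_mem_upperPolarized hf).integrable_mul (memLp_two_of_mem_upperPolarized hg)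
  obtain ⟨F, hF, hFO, hFf⟩ := hf
  obtain ⟨G, hG, hGO, hGg⟩ := hg
  have hFG : (fun x : ℝ => (F * G) x) = f * g :=
    funext fun x => congrArg₂ (· * ·) (hFf x) (hGg x)
  have hinv : (fun z : ℂ => z⁻¹) =o[cobounded ℂ ⊓ 𝓟 {z | 0 ≤ z.im}] fun _ => (1 : ℂ) :=
    (isLittleO_one_iff ℂ).2 (tendsto_inv₀_cobounded.mono_left inf_le_left)
  rw [← hFG] at hint ⊢
  refine integral_eq_zero_of_diffContOnCl_upperHalfPlane (hF.smul hG) ?_ hint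
  exact (hFO.mul_isLittleO (hGO.trans_isLittleO hinv)).congr_right fun z => mul_one z⁻¹

theorem integral_mul_eq_zero_of_star_mem_upperPolarized (hf : star f ∈ upperPolarized)
    (hg : star g ∈ upperPolarized) : ∫ x, (f * g) x = 0 := by
  have hstar : starRingEnd ℂ (∫ x, (f * g) x) = 0 := by
    rw [← integral_conj, ← integral_mul_eq_zero_of_mem_upperPolarized hf hg]
    simp [Pi.star_apply]
  simpa using hstar

end Polarized

theorem bubble_polynomial_identity {R : Type*} [CommRing R]
    (σ₁p σ₁m σ₂p σ₂m τ₁p τ₁m τ₂p τ₂m : R) :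
    (σ₁p + σ₁m) * (σ₂p + σ₂m) + (τ₁p + τ₁m) * (τ₂p + τ₂m)
        - ((σ₁p + τ₁m) * (σ₂m + τ₂p) + (σ₁m + τ₁p) * (σ₂p + τ₂m))
      = (σ₁p - τ₁p) * (σ₂p - τ₂p) + (σ₁m - τ₁m) * (σ₂m - τ₂m) := by
  ring

theorem bubble_diagrammatic_cutting_equation_general
    {σ₁p σ₁m σ₂p σ₂m τ₁p τ₁m τ₂p τ₂m : ℝ → ℂ}
    (hσ₁p : σ₁p ∈ upperPolarized) (hσ₁m : star σ₁m ∈ upperPolarized)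
    (hσ₂p : σ₂p ∈ upperPolarized) (hσ₂m : star σ₂m ∈ upperPolarized)
    (hτ₁p : τ₁p ∈ upperPolarized) (hτ₁m : star τ₁m ∈ upperPolarized)
    (hτ₂p : τ₂p ∈ upperPolarized) (hτ₂m : star τ₂m ∈ upperPolarized) :
    Integrable ((σ₁p + σ₁m) * (σ₂p + σ₂m)) ∧
    Integrable ((τ₁p + τ₁m) * (τ₂p + τ₂m)) ∧
    Integrable ((σ₁p + τ₁m) * (σ₂m + τ₂p)) ∧
    Integrable ((σ₁m + τ₁p) * (σ₂p + τ₂m)) ∧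
    (∫ k, ((σ₁p + σ₁m) * (σ₂p + σ₂m)) k) + (∫ k, ((τ₁p + τ₁m) * (τ₂p + τ₂m)) k)
      = (∫ k, ((σ₁p + τ₁m) * (σ₂m + τ₂p)) k) + (∫ k, ((σ₁m + τ₁p) * (σ₂p + τ₂m)) k) := by
  have upper {f : ℝ → ℂ} (hf : f ∈ upperPolarized) := memLp_two_of_mem_upperPolarized hf
  have lower {f : ℝ → ℂ} (hf : star f ∈ upperPolarized) := memLp_two_of_star_mem_upperPolarized hf
  have hz := ((upper hσ₁p).add (lower hσ₁m)).integrable_mul ((upper hσ₂p).add (lower hσ₂m))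
  have hw := ((upper hτ₁p).add (lower hτ₁m)).integrable_mul ((upper hτ₂p).add (lower hτ₂m))
  have huv := ((upper hσ₁p).add (lower hτ₁m)).integrable_mul ((lower hσ₂m).add (upper hτ₂p))
  have hvu := ((lower hσ₁m).add (upper hτ₁p)).integrable_mul ((upper hσ₂p).add (lower hτ₂m))
  have hp₁ := sub_mem hσ₁p hτ₁p
  have hp₂ := sub_mem hσ₂p hτ₂p
  have hm₁ : star (σ₁m - τ₁m) ∈ upperPolarized := by simpa only [star_sub] using sub_mem hσ₁m hτ₁m
  have hm₂ : star (σ₂m - τ₂m) ∈ upperPolarized := by simpa only [star_sub] using sub_mem hσ₂m hτ₂m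
  refine ⟨hz, hw, huv, hvu, ?_⟩
  rw [← integral_add' hz hw, ← integral_add' huv hvu, ← sub_eq_zero,
    ← integral_sub' (hz.add hw) (huv.add hvu), bubble_polynomial_identity,
    integral_add' ((upper hp₁).integrable_mul (upper hp₂)) ((lower hm₁).integrable_mul (lower hm₂)),
    integral_mul_eq_zero_of_mem_upperPolarized hp₁ hp₂,
    integral_mul_eq_zero_of_star_mem_upperPolarized hm₁ hm₂, add_zero]

theorem bubble_diagrammatic_cutting_equation
    (ω₁ ω₂ : ℂ) (hω₁ : ω₁.im < 0) (hω₂ : ω₂.im < 0) (p : ℝ)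
    (σ₁p σ₁m σ₂p σ₂m τ₁p τ₁m τ₂p τ₂m z₁ z₂ w₁ w₂ u₁ u₂ v₁ v₂ : ℝ → ℂ)
    (hσ₁p : ∀ k, σ₁p k = (1 / (2 * ω₁)) * ((k : ℂ) - ω₁)⁻¹)
    (hσ₁m : ∀ k, σ₁m k = -(1 / (2 * ω₁)) * ((k : ℂ) + ω₁)⁻¹)
    (hσ₂p : ∀ k, σ₂p k = (1 / (2 * ω₂)) * ((k : ℂ) - (p : ℂ) - ω₂)⁻¹)
    (hσ₂m : ∀ k, σ₂m k = -(1 / (2 * ω₂)) * ((k : ℂ) - (p : ℂ) + ω₂)⁻¹)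
    (hτ₁p : ∀ k, τ₁p k = -(starRingEnd ℂ) (σ₁m k))
    (hτ₁m : ∀ k, τ₁m k = -(starRingEnd ℂ) (σ₁p k))
    (hτ₂p : ∀ k, τ₂p k = -(starRingEnd ℂ) (σ₂m k))
    (hτ₂m : ∀ k, τ₂m k = -(starRingEnd ℂ) (σ₂p k))
    (hz₁ : ∀ k, z₁ k = σ₁p k + σ₁m k) (hz₂ : ∀ k, z₂ k = σ₂p k + σ₂m k)
    (hw₁ : ∀ k, w₁ k = τ₁p k + τ₁m k) (hw₂ : ∀ k, w₂ k = τ₂p k + τ₂m k)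
    (hu₁ : ∀ k, u₁ k = σ₁p k + τ₁m k) (hu₂ : ∀ k, u₂ k = σ₂p k + τ₂m k)
    (hv₁ : ∀ k, v₁ k = σ₁m k + τ₁p k) (hv₂ : ∀ k, v₂ k = σ₂m k + τ₂p k) :
    Integrable (fun k : ℝ => z₁ k * z₂ k) ∧
    Integrable (fun k : ℝ => w₁ k * w₂ k) ∧
    Integrable (fun k : ℝ => u₁ k * v₂ k) ∧
    Integrable (fun k : ℝ => v₁ k * u₂ k) ∧
    (∫ k : ℝ, z₁ k * z₂ k) + (∫ k : ℝ, w₁ k * w₂ k)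
      = (∫ k : ℝ, u₁ k * v₂ k) + (∫ k : ℝ, v₁ k * u₂ k) := by
  have memσ₁p : σ₁p ∈ upperPolarized := by
    simpa only [← hσ₁p] using mul_inv_sub_mem_upperPolarized (1 / (2 * ω₁)) hω₁
  have memσ₁m : star σ₁m ∈ upperPolarized := by
    simpa only [sub_neg_eq_add, ← hσ₁m] using star_mul_inv_sub_mem_upperPolarized
      (-(1 / (2 * ω₁))) (a := -ω₁) (by simpa using hω₁)
  have memσ₂p : σ₂p ∈ upperPolarized := by
    simpa only [← sub_sub, ← hσ₂p] using mul_inv_sub_mem_upperPolarized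
      (1 / (2 * ω₂)) (a := p + ω₂) (by simpa using hω₂)
  have memσ₂m : star σ₂m ∈ upperPolarized := by
    simpa only [← sub_add, ← hσ₂m] using star_mul_inv_sub_mem_upperPolarized
      (-(1 / (2 * ω₂))) (a := p - ω₂) (by simpa using hω₂)
  obtain rfl : τ₁p = -star σ₁m := funext hτ₁p
  obtain rfl : τ₁m = -star σ₁p := funext hτ₁m
  obtain rfl : τ₂p = -star σ₂m := funext hτ₂p
  obtain rfl : τ₂m = -star σ₂p := funext hτ₂m
  simp only [hz₁, hz₂, hw₁, hw₂, hu₁, hu₂, hv₁, hv₂]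
  exact bubble_diagrammatic_cutting_equation_general memσ₁p memσ₁m memσ₂p memσ₂m
    (neg_mem memσ₁m) (by simpa using memσ₁p) (neg_mem memσ₂m) (by simpa using memσ₂p)
end
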